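/- Let M be the MDP induced by a symbolic MDP with variables V, commands C and target formula φ, and let M' be its assignment-labeled version. Then the relation R = {((s,x), s) : s ∈ VAL_V, x an assignment or ⊥} is a probabilistic bisimulation between M' and M (related states enable exactly the same commands, and for each enabled command the two resulting distributions assign equal probability to each R-closed set of state pairs), and consequently the maximal probability of reaching a state whose valuation component satisfies φ in M' equals the maximal probability of reaching a state satisfying φ in M. -/

import Mathlib

/-!
Forgetting the label maps the distribution of a command in `(s, x)` to its distribution in `s`,
which gives the bisimulation.

For the maximal reachability probabilities, a strategy of the labeled MDP may use the labels as a
source of randomness, so strategies cannot simply be projected. Instead both sides are identified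
with the limit of value iteration: `MDP.valueIter E n s` is the optimal probability of reaching `E`
from `s` within `n` steps, defined by the Bellman recursion. Every strategy does at most this well
(`MDP.boundedReach_le_valueIter`), and since there are finitely many actions, choosing a maximising
action at every step gives a valid strategy that does at least this well
(`MDP.exists_valid_valueIter_le`). Hence `PmaxFrom E s = ⨆ n, valueIter E n s`
(`MDP.pmaxFrom_eq_iSup_valueIter`), and an induction on `n` shows that the iterates of the labeled
MDP at `(s, x)` agree with those of the induced MDP at `s`.
-/

open scoped ENNReal

/-- A Markov decision process with state space `S` and action set `A`:
`P s a s'` is the transition probability. For the MDPs considered here, for every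
`s, a` the total mass `∑' s', P s a s'` is `1` (the action is enabled) or `0`. -/
structure MDP (S : Type*) (A : Type*) where
  P : S → A → S → ℝ≥0∞
  init : S

namespace MDP

variable {S A : Type*}

/-- An action is enabled in a state iff its outgoing probabilities sum to one. -/
def Enabled (M : MDP S A) (s : S) (a : A) : Prop :=
  (∑' s', M.P s a s') = 1

/-- The last state of a history (a list of action/state steps), given the start state. -/
def lastSt (s : S) (h : List (A × S)) : S :=
  ((h.getLast?).map Prod.snd).getD s

open Classical in
/-- Probability of a finite path (a list of action/state steps) from state `s` with
accumulated history `h`, under the (history-dependent) strategy `σ`. -/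
noncomputable def pathProb (M : MDP S A) (σ : List (A × S) → A) :
    S → List (A × S) → List (A × S) → ℝ≥0∞
  | _, _, [] => 1
  | s, h, (a, s') :: rest =>
      (if σ h = a then M.P s a s' else 0) * pathProb M σ s' (h ++ [(a, s')]) rest

/-- The path visits the target set `E` exactly at its final state and never before. -/
def FirstHit (E : Set S) : S → List (A × S) → Prop
  | s, [] => s ∈ E
  | s, (_, s') :: rest => s ∉ E ∧ FirstHit E s' rest

/-- A finite trace: every step has positive probability. -/
def IsTrace (M : MDP S A) : S → List (A × S) → Prop
  | _, [] => True
  | s, (a, s') :: rest => 0 < M.P s a s' ∧ IsTrace M s' rest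

/-- A strategy is valid from `s₀` if it always chooses an enabled action
whenever some action is enabled in the current state. -/
def ValidFrom (M : MDP S A) (s₀ : S) (σ : List (A × S) → A) : Prop :=
  ∀ h : List (A × S), (∃ a, M.Enabled (lastSt s₀ h) a) → M.Enabled (lastSt s₀ h) (σ h)

/-- Probability of reaching `E` from `s₀` under strategy `σ`: the total mass of the
(pairwise incompatible) first-hitting paths. -/
noncomputable def reachProbFrom (M : MDP S A) (σ : List (A × S) → A) (s₀ : S)
    (E : Set S) : ℝ≥0∞ :=
  ∑' l : {l : List (A × S) // FirstHit E s₀ l}, pathProb M σ s₀ [] l.1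

/-- Maximal probability of reaching `E` from `s`. -/
noncomputable def PmaxFrom (M : MDP S A) (E : Set S) (s : S) : ℝ≥0∞ :=
  ⨆ σ : {σ : List (A × S) → A // ValidFrom M s σ}, reachProbFrom M σ.1 s E

/-- Maximal probability of reaching `E` from the initial state. -/
noncomputable def Pmax (M : MDP S A) (E : Set S) : ℝ≥0∞ :=
  PmaxFrom M E M.init

/-- Minimal probability of reaching `E` from `s`. -/
noncomputable def PminFrom (M : MDP S A) (E : Set S) (s : S) : ℝ≥0∞ :=
  ⨅ σ : {σ : List (A × S) → A // ValidFrom M s σ}, reachProbFrom M σ.1 s E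

/-- Minimal probability of reaching `E` from the initial state. -/
noncomputable def Pmin (M : MDP S A) (E : Set S) : ℝ≥0∞ :=
  PminFrom M E M.init

end MDP

/-- A symbolic MDP over states `Val` (valuations of the variables): a set of commands,
each with a guard and a finite-support distribution over assignments (semantically,
state transformers `Val → Val`), and an initial valuation. -/
structure SymMDP (Val : Type*) (Cmd : Type*) where
  guard : Cmd → Val → Prop
  dist : Cmd → PMF (Val → Val)
  finSupp : ∀ c, (dist c).support.Finite
  init : Val

open Classical in
/-- The MDP induced by a symbolic MDP: command `c` is enabled in `s` iff its guard
holds, and then the next-state distribution is the pushforward of `dist c` under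
evaluation at `s`. -/
noncomputable def SymMDP.toMDP {Val Cmd : Type*} (M : SymMDP Val Cmd) : MDP Val Cmd where
  P := fun s c s' => if M.guard c s then ((M.dist c).map fun a => a s) s' else 0
  init := M.init

open Classical in
/-- The assignment-labeled version `M'` of the MDP induced by a symbolic MDP: states
additionally record the assignment applied last (`none` initially); command `c` is
enabled in `(s, x)` iff its guard holds in `s`, and taking it moves to `(a s, some a)`
with probability `dist c a`. -/
noncomputable def SymMDP.labeled {Val Cmd : Type*} (M : SymMDP Val Cmd) :
    MDP (Val × Option (Val → Val)) Cmd where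
  P := fun p c q =>
    if M.guard c p.1 then ((M.dist c).map fun a => (a p.1, some a)) q else 0
  init := (M.init, none)

/-- A probabilistic bisimulation between two MDPs over the same action set: related
states enable exactly the same actions, and for each enabled action the two resulting
distributions assign equal probability to each `R`-closed pair of sets. -/
def IsBisim {S₁ S₂ A : Type*} (M₁ : MDP S₁ A) (M₂ : MDP S₂ A)
    (R : S₁ → S₂ → Prop) : Prop :=
  ∀ s₁ s₂, R s₁ s₂ →
    (∀ a, M₁.Enabled s₁ a ↔ M₂.Enabled s₂ a) ∧
    (∀ a, M₁.Enabled s₁ a →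
      ∀ (U₁ : Set S₁) (U₂ : Set S₂),
        (∀ t₁ t₂, R t₁ t₂ → (t₁ ∈ U₁ ↔ t₂ ∈ U₂)) →
        (∑' t : U₁, M₁.P s₁ a t) = (∑' t : U₂, M₂.P s₂ a t))

namespace MDP

variable {S A : Type*}

open Classical in
/-- Value iteration: the optimal probability of reaching `E` from a state within `n` steps.
The supremum ranges over all actions, since disabled ones contribute `0` in the MDPs at hand. -/
noncomputable def valueIter (M : MDP S A) (E : Set S) : ℕ → S → ℝ≥0∞
  | 0, s => if s ∈ E then 1 else 0
  | n + 1, s => if s ∈ E then 1 else ⨆ a, ∑' s', M.P s a s' * valueIter M E n s'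

open Classical in
/-- The probability, under `σ` and with accumulated history `h`, of reaching `E` from `s` within
`n` steps. -/
noncomputable def boundedReach (M : MDP S A) (E : Set S) (σ : List (A × S) → A) (n : ℕ)
    (s : S) (h : List (A × S)) : ℝ≥0∞ :=
  ∑' l : List (A × S), if FirstHit E s l ∧ l.length ≤ n then pathProb M σ s h l else 0

theorem tsum_list {α : Type*} (f : List α → ℝ≥0∞) :
    ∑' l, f l = f [] + ∑' (x : α) (l : List α), f (x :: l) := by
  let e : Unit ⊕ α × List α ≃ List α :=
    { toFun := Sum.elim (fun _ => []) fun p => p.1 :: p.2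
      invFun := fun l => match l with
        | [] => Sum.inl ()
        | x :: l => Sum.inr (x, l)
      left_inv := by rintro (_ | ⟨x, l⟩) <;> rfl
      right_inv := by rintro (_ | ⟨x, l⟩) <;> rfl }
  rw [← e.tsum_eq f, Summable.tsum_sum ENNReal.summable ENNReal.summable, tsum_fintype,
    ENNReal.tsum_prod']
  simp [e]

theorem boundedReach_of_mem (M : MDP S A) {E : Set S} (σ : List (A × S) → A) (n : ℕ)
    {s : S} (h : List (A × S)) (hs : s ∈ E) : boundedReach M E σ n s h = 1 := by
  rw [boundedReach, tsum_list]
  simp [FirstHit, hs, pathProb]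

theorem boundedReach_zero (M : MDP S A) {E : Set S} (σ : List (A × S) → A)
    {s : S} (h : List (A × S)) (hs : s ∉ E) : boundedReach M E σ 0 s h = 0 := by
  rw [boundedReach, tsum_list]
  simp [FirstHit, hs]

theorem boundedReach_succ (M : MDP S A) {E : Set S} (σ : List (A × S) → A) (n : ℕ)
    {s : S} (h : List (A × S)) (hs : s ∉ E) :
    boundedReach M E σ (n + 1) s h =
      ∑' s', M.P s (σ h) s' * boundedReach M E σ n s' (h ++ [(σ h, s')]) := by
  classical
  rw [boundedReach, tsum_list, ENNReal.tsum_prod']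
  rw [tsum_eq_single (σ h)]
  · simp only [FirstHit, hs, boundedReach, ← ENNReal.tsum_mul_left]
    simp [pathProb]
  · intro a ha
    simp [pathProb, ha.symm]

theorem boundedReach_le_valueIter (M : MDP S A) (E : Set S) (σ : List (A × S) → A) (n : ℕ)
    (s : S) (h : List (A × S)) : boundedReach M E σ n s h ≤ valueIter M E n s := by
  induction n generalizing s h with
  | zero =>
    by_cases hs : s ∈ E
    · simp [boundedReach_of_mem, valueIter, hs]
    · simp [boundedReach_zero, hs]
  | succ n ih =>
    by_cases hs : s ∈ E
    · simp [boundedReach_of_mem, valueIter, hs]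
    · rw [boundedReach_succ M σ n h hs, valueIter, if_neg hs]
      refine le_trans ?_ (le_iSup _ (σ h))
      exact ENNReal.tsum_le_tsum fun s' => by gcongr; exact ih _ _

theorem boundedReach_le_reachProbFrom (M : MDP S A) (E : Set S) (σ : List (A × S) → A) (n : ℕ)
    (s : S) : boundedReach M E σ n s [] ≤ reachProbFrom M σ s E := by
  classical
  rw [reachProbFrom, boundedReach]
  refine le_trans ?_ (tsum_subtype {l | FirstHit E s l} (fun l => pathProb M σ s [] l)).ge
  refine ENNReal.tsum_le_tsum fun l => ?_
  by_cases hl : FirstHit E s l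
  · rw [Set.indicator_of_mem (by exact hl)]
    split_ifs <;> simp
  · simp [hl]

theorem reachProbFrom_le_iSup_boundedReach (M : MDP S A) (E : Set S) (σ : List (A × S) → A)
    (s : S) : reachProbFrom M σ s E ≤ ⨆ n, boundedReach M E σ n s [] := by
  classical
  rw [reachProbFrom]
  refine (tsum_subtype {l | FirstHit E s l} (fun l => pathProb M σ s [] l)).le.trans ?_
  rw [ENNReal.tsum_eq_iSup_sum]
  refine iSup_le fun F => ?_
  -- The finitely many paths in `F` have bounded length.
  refine le_trans ?_ (le_iSup _ (F.sup List.length))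
  refine le_trans (Finset.sum_le_sum fun l hl => ?_) (ENNReal.sum_le_tsum F)
  have hlen : l.length ≤ F.sup List.length := Finset.le_sup (f := List.length) hl
  by_cases hf : FirstHit E s l
  · rw [Set.indicator_of_mem (by exact hf), if_pos ⟨hf, hlen⟩]
  · simp [hf]

/-- An action maximising the expected `n`-step value can be taken enabled whenever some action is
enabled: if the maximiser found is disabled, then the maximum is `0`. -/
theorem exists_enabled_max [Finite A] [Nonempty A] (M : MDP S A)
    (hM : ∀ s a, M.Enabled s a ∨ ∀ s', M.P s a s' = 0) (E : Set S) (n : ℕ) (s : S) :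
    ∃ a, ((∃ b, M.Enabled s b) → M.Enabled s a) ∧
      ⨆ b, ∑' s', M.P s b s' * valueIter M E n s' ≤ ∑' s', M.P s a s' * valueIter M E n s' := by
  obtain ⟨a, ha⟩ := exists_eq_ciSup_of_finite
    (f := fun b => ∑' s', M.P s b s' * valueIter M E n s')
  rcases hM s a with h | h
  · exact ⟨a, fun _ => h, ha.ge⟩
  · have h0 : ⨆ b, ∑' s', M.P s b s' * valueIter M E n s' = 0 := by
      rw [← ha]; simp [h]
    by_cases hb : ∃ b, M.Enabled s b
    · obtain ⟨b, hb⟩ := hb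
      exact ⟨b, fun _ => hb, by rw [h0]; exact zero_le⟩
    · exact ⟨a, fun h' => absurd h' hb, by rw [h0]; exact zero_le⟩

theorem exists_valid_valueIter_le [Finite A] [Nonempty A] (M : MDP S A)
    (hM : ∀ s a, M.Enabled s a ∨ ∀ s', M.P s a s' = 0) (E : Set S) (n : ℕ) (s₀ : S) :
    ∃ σ, ValidFrom M s₀ σ ∧ valueIter M E n s₀ ≤ boundedReach M E σ n s₀ [] := by
  choose c hc hmax using exists_enabled_max M hM E
  -- With `k + 1 = n - h.length` steps left, choose optimally for the `k` steps that follow.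
  let σ : List (A × S) → A := fun h => c (n - h.length - 1) (lastSt s₀ h)
  refine ⟨σ, fun h => hc _ _, ?_⟩
  have key : ∀ k s (h : List (A × S)), lastSt s₀ h = s → k + h.length = n →
      valueIter M E k s ≤ boundedReach M E σ k s h := by
    intro k
    induction k with
    | zero =>
      intro s h _ _
      by_cases hs : s ∈ E
      · simp [boundedReach_of_mem, valueIter, hs]
      · simp [valueIter, hs]
    | succ k ih =>
      intro s h hlast hlen
      by_cases hs : s ∈ E
      · simp [boundedReach_of_mem, valueIter, hs]
      · have hσ : σ h = c k s := by
          simp only [σ, hlast]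
          congr 1
          omega
        rw [boundedReach_succ M σ k h hs, valueIter, if_neg hs]
        refine (hmax k s).trans ?_
        rw [← hσ]
        refine ENNReal.tsum_le_tsum fun s' => ?_
        gcongr
        refine ih _ _ ?_ ?_
        · simp [lastSt]
        · simp only [List.length_append, List.length_singleton]
          omega
  exact key n s₀ [] rfl (by simp)

theorem pmaxFrom_eq_iSup_valueIter [Finite A] [Nonempty A] (M : MDP S A)
    (hM : ∀ s a, M.Enabled s a ∨ ∀ s', M.P s a s' = 0) (E : Set S) (s : S) :
    PmaxFrom M E s = ⨆ n, valueIter M E n s := by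
  apply le_antisymm
  · refine iSup_le fun σ => (reachProbFrom_le_iSup_boundedReach M E σ.1 s).trans ?_
    exact iSup_mono fun n => boundedReach_le_valueIter M E σ.1 n s []
  · refine iSup_le fun n => ?_
    obtain ⟨σ, hσ, hle⟩ := exists_valid_valueIter_le M hM E n s
    exact (hle.trans (boundedReach_le_reachProbFrom M E σ n s)).trans
      (le_iSup (fun σ : {σ // ValidFrom M s σ} => reachProbFrom M σ.1 s E) ⟨σ, hσ⟩)

end MDP

theorem tsum_map_mul {α β : Type*} (p : PMF α) (f : α → β) (g : β → ℝ≥0∞) :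
    ∑' b, (p.map f) b * g b = ∑' a, p a * g (f a) := by
  classical
  simp only [PMF.map_apply, ← ENNReal.tsum_mul_right]
  rw [ENNReal.tsum_comm]
  refine tsum_congr fun a => ?_
  rw [tsum_eq_single (f a)]
  · simp
  · intro b hb
    simp [hb]

namespace SymMDP

variable {Val Cmd : Type*} (M : SymMDP Val Cmd)

theorem enabled_toMDP (s : Val) (c : Cmd) : M.toMDP.Enabled s c ↔ M.guard c s := by
  by_cases h : M.guard c s
  · simp [MDP.Enabled, toMDP, h, PMF.tsum_coe, -PMF.map_apply]
  · simp [MDP.Enabled, toMDP, h]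

theorem enabled_labeled (p : Val × Option (Val → Val)) (c : Cmd) :
    M.labeled.Enabled p c ↔ M.guard c p.1 := by
  by_cases h : M.guard c p.1
  · simp [MDP.Enabled, labeled, h, PMF.tsum_coe, -PMF.map_apply]
  · simp [MDP.Enabled, labeled, h]

/-- The transition distribution of the induced MDP is the image of that of the labeled MDP under
forgetting the label, expressed by integrating functions of the valuation. -/
theorem tsum_labeled_mul (p : Val × Option (Val → Val)) (c : Cmd) (g : Val → ℝ≥0∞) :
    ∑' q, M.labeled.P p c q * g q.1 = ∑' s, M.toMDP.P p.1 c s * g s := by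
  by_cases h : M.guard c p.1
  · simp only [labeled, toMDP, h, if_true]
    rw [tsum_map_mul _ _ (fun q : Val × Option (Val → Val) => g q.1), tsum_map_mul]
  · simp [labeled, toMDP, h]

theorem valueIter_labeled (φ : Val → Prop) (n : ℕ) (p : Val × Option (Val → Val)) :
    M.labeled.valueIter {p | φ p.1} n p = M.toMDP.valueIter {s | φ s} n p.1 := by
  induction n generalizing p with
  | zero => simp [MDP.valueIter]
  | succ n ih =>
    simp only [MDP.valueIter, ih, tsum_labeled_mul, Set.mem_ofPred_eq]

theorem isBisim_labeled : IsBisim M.labeled M.toMDP (fun p s => p.1 = s) := by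
  classical
  rintro p _ rfl
  refine ⟨fun a => by rw [enabled_labeled, enabled_toMDP], fun a _ U₁ U₂ hU => ?_⟩
  rw [tsum_subtype U₁ (fun t => M.labeled.P p a t), tsum_subtype U₂ (fun t => M.toMDP.P p.1 a t)]
  have := M.tsum_labeled_mul p a (fun s => if s ∈ U₂ then 1 else 0)
  have hU' : ∀ t : Val × Option (Val → Val), t ∈ U₁ ↔ t.1 ∈ U₂ := fun t => hU t t.1 rfl
  simpa [Set.indicator_apply, hU'] using this

end SymMDP

/-- Forgetting the last applied assignment is a probabilistic
bisimulation between the assignment-labeled MDP `M'` and `M`; consequently the maximal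
probabilities of reaching the target formula `φ` coincide. -/
theorem labeled_bisimilar {Val Cmd : Type*} [Finite Cmd]
    (M : SymMDP Val Cmd) (φ : Val → Prop) (tc : Cmd)
    (htcg : ∀ s, M.guard tc s ↔ φ s) (htcd : M.dist tc = PMF.pure id) :
    IsBisim M.labeled M.toMDP (fun p s => p.1 = s) ∧
    MDP.Pmax M.labeled {p | φ p.1} = MDP.Pmax M.toMDP {s | φ s} := by
  refine ⟨M.isBisim_labeled, ?_⟩
  have : Nonempty Cmd := ⟨tc⟩
  rw [MDP.Pmax, MDP.Pmax, MDP.pmaxFrom_eq_iSup_valueIter, MDP.pmaxFrom_eq_iSup_valueIter]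
  · exact iSup_congr fun n => M.valueIter_labeled φ n (M.init, none)
  · intro s c
    rw [M.enabled_toMDP]
    by_cases h : M.guard c s
    · exact Or.inl h
    · exact Or.inr fun s' => by simp [SymMDP.toMDP, h]
  · intro p c
    rw [M.enabled_labeled]
    by_cases h : M.guard c p.1
    · exact Or.inl h
    · exact Or.inr fun q => by simp [SymMDP.labeled, h]
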